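/- For every complex number q with 0 < |q| < 1, one has ∑_{i,j,k,l ≥ 0} q^{2i²+2j²+2k²+2l²−2ij−2ik−2il+2jk+2jl−j} / ((q²;q²)_i (q²;q²)_j (q²;q²)_k (q²;q²)_l) = J_4⁵ J_{1,8} J_{6,16} / (J_1 J_2³ J_8² J_16) + 2q · J_8² J_{3,8} J_{2,16} / (J_1 J_2 J_4 J_16). -/

import Mathlib

open scoped BigOperators

/-- The infinite q-Pochhammer symbol `(a; q)_∞ = ∏_{k=0}^∞ (1 - a q^k)`. -/
noncomputable def qPochInf (a q : ℂ) : ℂ := ∏' n : ℕ, (1 - a * q ^ n)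

/-- The finite q-Pochhammer symbol `(a; q)_n = ∏_{k=0}^{n-1} (1 - a q^k)`. -/
noncomputable def qPoch (a q : ℂ) (n : ℕ) : ℂ :=
  Finset.prod (Finset.range n) (fun k => 1 - a * q ^ k)

/-- `J_m = (q^m; q^m)_∞`. -/
noncomputable def J (q : ℂ) (m : ℕ) : ℂ := qPochInf (q ^ m) (q ^ m)

/-- `J_{a,m} = (q^a; q^m)_∞ (q^{m-a}; q^m)_∞ (q^m; q^m)_∞`. -/
noncomputable def Jam (q : ℂ) (a m : ℕ) : ℂ :=
  qPochInf (q ^ a) (q ^ m) * qPochInf (q ^ (m - a)) (q ^ m) * qPochInf (q ^ m) (q ^ m)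

/-!
Write `k = a + c` and `l = b + c` and expand `1 / ((q²; q²)_k (q²; q²)_l)` by the `q`-Vandermonde
identity as a sum over `c`. In the variables `m = i - a` and `s = j + b + 2c` the exponent becomes
`m² + (m - s)² + 2a(a + m) + (j² - j + b²)`, so the sum over `a` is Durfee's rectangle identity,
and the sum over `b` and `c` is `1 / (q; q)_s`, the coefficient of `z ^ s` in
`(-z; q²)_∞ (-zq; q²)_∞ / (z²; q²)_∞ = 1 / (z; q)_∞`. The remaining double sum over `m` and `s`
splits by the parity of `s` into two theta series times the even and odd parts of
`∑ q ^ (s² / 2) / (q; q)_s`, which Euler's identity and the Jacobi triple product evaluate.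
-/

open Filter Function Topology

section Series

lemma tsum_eq_tsum_of_telescoping {G : Type*} [AddCommGroup G] [TopologicalSpace G]
    [IsTopologicalAddGroup G] [T2Space G] {f g B : ℤ → G} (hf : Summable f) (hg : Summable g)
    (hB : Summable B) (h : ∀ c, f c - g c = B c - B (c + 1)) : ∑' c, f c = ∑' c, g c := by
  have hB' : Summable fun c => B (c + 1) := (Equiv.addRight (1 : ℤ)).summable_iff.mpr hB
  rw [← sub_eq_zero, ← hf.tsum_sub hg, tsum_congr h, hB.tsum_sub hB', sub_eq_zero]
  exact ((Equiv.addRight (1 : ℤ)).tsum_eq B).symm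

lemma tsum_int_even_add_odd {M : Type*} [AddCommMonoid M] [TopologicalSpace M] [ContinuousAdd M]
    [T2Space M] {f : ℤ → M} (he : Summable fun n => f (2 * n))
    (ho : Summable fun n => f (2 * n + 1)) :
    ∑' n, f (2 * n) + ∑' n, f (2 * n + 1) = ∑' n, f n := by
  have inj_even : Injective fun n : ℤ => 2 * n := fun a b h => by simpa using h
  have inj_odd : Injective fun n : ℤ => 2 * n + 1 := fun a b h => by simpa using h
  have range_even : Set.range (fun n : ℤ => 2 * n) = {n | Even n} := by
    ext n; simp [even_iff_exists_two_mul]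
  have range_odd : Set.range (fun n : ℤ => 2 * n + 1) = {n | Odd n} := by
    ext n; simp [Odd]
  refine (HasSum.add_isCompl ?_ (inj_even.hasSum_range_iff.2 he.hasSum)
    (inj_odd.hasSum_range_iff.2 ho.hasSum)).tsum_eq.symm
  rw [range_even, range_odd]
  exact Int.isCompl_even_odd

lemma tsum_neg_one_zpow_mul {R : Type*} [DivisionRing R] [UniformSpace R] [IsUniformAddGroup R]
    [CompleteSpace R] [T2Space R] {f : ℤ → R} (hf : Summable f) :
    ∑' n, (-1) ^ n * f n = ∑' n, f (2 * n) - ∑' n, f (2 * n + 1) := by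
  have he : Summable fun n : ℤ => f (2 * n) := hf.comp_injective fun a b h => by simpa using h
  have ho : Summable fun n : ℤ => f (2 * n + 1) := hf.comp_injective fun a b h => by simpa using h
  have sign_even (n : ℤ) : (-1 : R) ^ (2 * n) * f (2 * n) = f (2 * n) := by
    rw [(even_two_mul n).neg_one_zpow, one_mul]
  have sign_odd (n : ℤ) : (-1 : R) ^ (2 * n + 1) * f (2 * n + 1) = -f (2 * n + 1) := by
    rw [(odd_two_mul_add_one n).neg_one_zpow, neg_one_mul]
  rw [← tsum_int_even_add_odd (by simpa only [sign_even] using he)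
    (by simpa only [sign_odd] using ho.neg)]
  simp only [sign_even, sign_odd, tsum_neg, sub_eq_add_neg]

lemma tsum_prod_fivefold {G α β γ δ ε : Type*} [AddCommGroup G] [UniformSpace G]
    [IsUniformAddGroup G] [CompleteSpace G] [T2Space G] {f : α × β × γ × δ × ε → G}
    (hf : Summable f) :
    ∑' p, f p = ∑' (a) (b) (c) (d) (e), f (a, b, c, d, e) := by
  rw [hf.tsum_prod]
  refine tsum_congr fun a => ?_
  rw [(hf.prod_factor a).tsum_prod]
  refine tsum_congr fun b => ?_
  rw [((hf.prod_factor a).prod_factor b).tsum_prod]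
  exact tsum_congr fun c => (((hf.prod_factor a).prod_factor b).prod_factor c).tsum_prod

lemma summable_zpow_sq_mul_zpow {r z : ℝ} (hr0 : 0 < r) (hr1 : r < 1) (hz : 0 < z) :
    Summable fun n : ℤ => r ^ (n ^ 2) * z ^ n := by
  have hT : 0 < -Real.log r / Real.pi := div_pos (neg_pos.mpr (Real.log_neg hr0 hr1)) Real.pi_pos
  refine (summable_pow_mul_jacobiTheta₂_term_bound (|Real.log z| / (2 * Real.pi)) hT
    0).of_nonneg_of_le (fun n => by positivity) fun n => ?_
  have hexp : r ^ (n ^ 2) * z ^ n = Real.exp (n ^ 2 * Real.log r + n * Real.log z) := by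
    rw [Real.exp_add, ← Real.log_zpow, Real.exp_log (by positivity), ← Int.cast_pow,
      ← Real.log_zpow, Real.exp_log (by positivity)]
  have habs : n * Real.log z ≤ |(n : ℝ)| * |Real.log z| := (le_abs_self _).trans_eq (abs_mul _ _)
  rw [hexp, pow_zero, one_mul, Real.exp_le_exp]
  calc (n : ℝ) ^ 2 * Real.log r + n * Real.log z
      ≤ n ^ 2 * Real.log r + |(n : ℝ)| * |Real.log z| := by gcongr
    _ = _ := by push_cast; field_simp; ring

lemma summable_zpow_sq_add_mul {r : ℝ} (hr0 : 0 < r) (hr1 : r < 1) (b : ℤ) :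
    Summable fun n : ℤ => r ^ (n ^ 2 + b * n) :=
  (summable_zpow_sq_mul_zpow hr0 hr1 (zpow_pos hr0 b)).congr fun n => by
    rw [zpow_add₀ hr0.ne', zpow_mul]

lemma summable_zpow_add {α β : Type*} {r : ℝ} (hr : 0 < r) {f : α → ℤ} {g : β → ℤ}
    (hf : Summable fun x => r ^ f x) (hg : Summable fun y => r ^ g y) :
    Summable fun p : α × β => r ^ (f p.1 + g p.2) :=
  (hf.mul_of_nonneg hg (fun _ => (zpow_pos hr _).le) fun _ => (zpow_pos hr _).le).congr
    fun _ => (zpow_add₀ hr.ne' _ _).symm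

lemma summable_zpow_mul_of_bounded {𝕜 α : Type*} [NormedDivisionRing 𝕜] [CompleteSpace 𝕜] {q : 𝕜}
    {e : α → ℤ} {c : α → 𝕜} {K : ℝ}
    (he : Summable fun x => ‖q‖ ^ e x) (hc : ∀ x, ‖c x‖ ≤ K) :
    Summable fun x => q ^ e x * c x := by
  refine (he.mul_right K).of_norm_bounded fun x => ?_
  rw [norm_mul, norm_zpow]
  gcongr
  exact hc x

end Series

section Pochhammer

variable {a q : ℂ}

lemma norm_pow_lt_one (hq : ‖q‖ < 1) {n : ℕ} (hn : n ≠ 0) : ‖q ^ n‖ < 1 := by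
  rw [norm_pow]
  exact pow_lt_one₀ (norm_nonneg _) hq hn

lemma pow_zpow_eq_zpow_mul {G : Type*} [DivisionMonoid G] (q : G) (m : ℕ) (n : ℤ) :
    (q ^ m) ^ n = q ^ (m * n) := by
  rw [zpow_mul, zpow_natCast]

lemma sq_zpow_eq_zpow_two_mul {G : Type*} [DivisionMonoid G] (q : G) (n : ℤ) :
    (q ^ 2) ^ n = q ^ (2 * n) :=
  pow_zpow_eq_zpow_mul q 2 n

lemma summable_norm_neg_mul_pow (a : ℂ) (hq : ‖q‖ < 1) :
    Summable fun n : ℕ => ‖-(a * q ^ n)‖ := by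
  simp only [norm_neg, norm_mul, norm_pow]
  exact (summable_geometric_of_lt_one (norm_nonneg _) hq).mul_left _

lemma multipliable_one_sub_mul_pow (a : ℂ) (hq : ‖q‖ < 1) :
    Multipliable fun n : ℕ => 1 - a * q ^ n := by
  simpa only [sub_eq_add_neg] using
    multipliable_one_add_of_summable (summable_norm_neg_mul_pow a hq)

lemma one_sub_mul_pow_ne_zero (ha : ‖a‖ < 1) (hq : ‖q‖ ≤ 1) (n : ℕ) : 1 - a * q ^ n ≠ 0 := by
  intro h
  have hlt : ‖a * q ^ n‖ < 1 := by
    rw [norm_mul, norm_pow]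
    exact mul_lt_one_of_nonneg_of_lt_one_left (norm_nonneg _) ha (pow_le_one₀ (norm_nonneg _) hq)
  rw [← sub_eq_zero.mp h, norm_one] at hlt
  exact lt_irrefl _ hlt

lemma qPochInf_ne_zero (ha : ‖a‖ < 1) (hq : ‖q‖ < 1) : qPochInf a q ≠ 0 := by
  have h := tprod_one_add_ne_zero_of_summable (f := fun n : ℕ => -(a * q ^ n))
    (fun n => by simpa only [← sub_eq_add_neg] using one_sub_mul_pow_ne_zero ha hq.le n)
    (summable_norm_neg_mul_pow a hq)
  simpa only [qPochInf, sub_eq_add_neg] using h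

lemma tendsto_qPoch (a : ℂ) (hq : ‖q‖ < 1) :
    Tendsto (qPoch a q) atTop (𝓝 (qPochInf a q)) :=
  (multipliable_one_sub_mul_pow a hq).hasProd.tendsto_prod_nat

lemma qPoch_succ (a q : ℂ) (n : ℕ) : qPoch a q (n + 1) = qPoch a q n * (1 - a * q ^ n) :=
  Finset.prod_range_succ _ n

lemma qPochInf_eq_one_sub_mul (a : ℂ) (hq : ‖q‖ < 1) :
    qPochInf a q = (1 - a) * qPochInf (a * q) q := by
  have hshift (n : ℕ) : 1 - a * q ^ (n + 1) = 1 - a * q * q ^ n := by ring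
  rw [qPochInf, tprod_eq_zero_mul' (by
    simpa only [hshift] using multipliable_one_sub_mul_pow (a * q) hq)]
  simp only [hshift, pow_zero, mul_one, qPochInf]

lemma qPochInf_mul_qPochInf_neg (a : ℂ) (hq : ‖q‖ < 1) :
    qPochInf a q * qPochInf (-a) q = qPochInf (a ^ 2) (q ^ 2) := by
  simp only [qPochInf]
  rw [← (multipliable_one_sub_mul_pow a hq).tprod_mul (multipliable_one_sub_mul_pow (-a) hq)]
  exact tprod_congr fun n => by ring

lemma qPoch_mul_eq_prod (a q : ℂ) (m n : ℕ) :
    qPoch a q (m * n) = ∏ i ∈ Finset.range m, qPoch (a * q ^ i) (q ^ m) n := by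
  induction n with
  | zero => simp [qPoch]
  | succ n ih =>
    simp only [qPoch_succ, Finset.prod_mul_distrib, ← ih]
    rw [qPoch, Nat.mul_succ, Finset.prod_range_add, ← qPoch]
    congr 1
    exact Finset.prod_congr rfl fun i _ => by rw [pow_add, pow_mul]; ring

lemma qPochInf_eq_prod (a : ℂ) (hq : ‖q‖ < 1) {m : ℕ} (hm : m ≠ 0) :
    qPochInf a q = ∏ i ∈ Finset.range m, qPochInf (a * q ^ i) (q ^ m) := by
  have hsub := (tendsto_qPoch a hq).comp
    (tendsto_id.const_mul_atTop' (Nat.pos_of_ne_zero hm) : Tendsto (fun n => m * n) atTop atTop)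
  have hprod := tendsto_finsetProd (Finset.range m) fun i _ =>
    tendsto_qPoch (a * q ^ i) (norm_pow_lt_one hq hm)
  exact tendsto_nhds_unique hsub (hprod.congr fun n => (qPoch_mul_eq_prod a q m n).symm)

end Pochhammer

section ReciprocalPochhammer

variable {q : ℂ}

/-- The reciprocal `1 / (q; q)_n` of the finite `q`-Pochhammer symbol, extended by zero to negative
`n`, so that `q`-series become sums over all of `ℤ` and can be reindexed by translations. -/
noncomputable def qPochInv (q : ℂ) (n : ℤ) : ℂ := if 0 ≤ n then (qPoch q q n.toNat)⁻¹ else 0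

lemma qPochInv_of_neg (q : ℂ) {n : ℤ} (hn : n < 0) : qPochInv q n = 0 := if_neg hn.not_ge

lemma nonneg_of_qPochInv_ne_zero {n : ℤ} (h : qPochInv q n ≠ 0) : 0 ≤ n :=
  not_lt.mp (mt (qPochInv_of_neg q) h)

lemma qPochInv_natCast (q : ℂ) (n : ℕ) : qPochInv q n = (qPoch q q n)⁻¹ := by simp [qPochInv]

lemma qPochInv_zero (q : ℂ) : qPochInv q 0 = 1 := by simp [qPochInv, qPoch]

lemma one_sub_zpow_mul_qPochInv (hq : ‖q‖ < 1) (n : ℤ) :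
    (1 - q ^ n) * qPochInv q n = qPochInv q (n - 1) := by
  obtain hn | rfl | hn := lt_trichotomy n 0
  · rw [qPochInv_of_neg q hn, qPochInv_of_neg q (by lia), mul_zero]
  · rw [qPochInv_of_neg q (by lia : (0 : ℤ) - 1 < 0), zpow_zero, sub_self, zero_mul]
  · obtain ⟨m, rfl⟩ : ∃ m : ℕ, n = (m + 1 : ℕ) := ⟨(n - 1).toNat, by lia⟩
    rw [show ((m + 1 : ℕ) : ℤ) - 1 = m by lia, qPochInv_natCast, qPochInv_natCast, zpow_natCast,
      pow_succ', qPoch_succ, mul_inv_rev, mul_inv_cancel_left₀ (one_sub_mul_pow_ne_zero hq hq.le m)]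

lemma tendsto_qPochInv_natCast_add (hq : ‖q‖ < 1) (a : ℤ) :
    Tendsto (fun k : ℕ => qPochInv q (k + a)) atTop (𝓝 (qPochInf q q)⁻¹) := by
  have hshift : Tendsto (fun k : ℕ => ((k : ℤ) + a).toNat) atTop atTop :=
    tendsto_atTop.mpr fun b => by
      filter_upwards [eventually_ge_atTop (b + a.natAbs)] with k hk
      lia
  refine (((tendsto_qPoch q hq).inv₀ (qPochInf_ne_zero hq hq)).comp hshift).congr' ?_
  filter_upwards [eventually_ge_atTop a.natAbs] with k hk
  exact (if_pos (by lia)).symm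

lemma exists_norm_qPochInv_le (hq : ‖q‖ < 1) : ∃ K : ℝ, 0 ≤ K ∧ ∀ n, ‖qPochInv q n‖ ≤ K := by
  obtain ⟨K, hK⟩ := (tendsto_qPochInv_natCast_add hq 0).norm.bddAbove_range
  have hnat (n : ℕ) : ‖qPochInv q n‖ ≤ K := hK ⟨n, by simp⟩
  have hK0 : 0 ≤ K := (norm_nonneg _).trans (hnat 0)
  refine ⟨K, hK0, fun n => ?_⟩
  obtain hn | hn := lt_or_ge n 0
  · rwa [qPochInv_of_neg q hn, norm_zero]
  · lift n to ℕ using hn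
    exact hnat n

lemma eq_mul_qPochInv_of_recurrence (hq : ‖q‖ < 1) {f : ℤ → ℂ} (hneg : ∀ n < 0, f n = 0)
    (hrec : ∀ n, (1 - q ^ n) * f n = f (n - 1)) (n : ℤ) : f n = f 0 * qPochInv q n := by
  obtain hn | hn := lt_or_ge n 0
  · rw [hneg n hn, qPochInv_of_neg q hn, mul_zero]
  lift n to ℕ using hn
  induction n with
  | zero => rw [Nat.cast_zero, qPochInv_zero, mul_one]
  | succ m ih =>
    have hne : 1 - q ^ ((m + 1 : ℕ) : ℤ) ≠ 0 := by
      rw [zpow_natCast, pow_succ']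
      exact one_sub_mul_pow_ne_zero hq hq.le m
    have hpred : ((m + 1 : ℕ) : ℤ) - 1 = m := by lia
    refine mul_left_cancel₀ hne ?_
    rw [hrec, mul_left_comm, one_sub_zpow_mul_qPochInv hq, hpred, ih]

/- `B` is a certificate in the sense of the `q`-Zeilberger algorithm: summing `h` over `c` gives the
recurrence of `1 / (q; q)_s` for the sum of `w s`. -/
lemma tsum_eq_mul_qPochInv_of_telescoping (hq : ‖q‖ < 1) {w B : ℤ → ℤ → ℂ}
    (hw : ∀ s c, w s c ≠ 0 → 0 ≤ c ∧ c ≤ s) (hB : ∀ s c, B s c ≠ 0 → 0 ≤ c ∧ c ≤ s)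
    (h : ∀ s c, (1 - q ^ s) * w s c - w (s - 1) c = B s c - B s (c + 1)) (s : ℤ) :
    ∑' c, w s c = w 0 0 * qPochInv q s := by
  have hsummable {v : ℤ → ℤ → ℂ} (hv : ∀ s c, v s c ≠ 0 → 0 ≤ c ∧ c ≤ s) (s : ℤ) :
      Summable (v s) :=
    summable_of_hasFiniteSupport ((Set.finite_Icc 0 s).subset fun c hc => hv s c hc)
  have hneg (s : ℤ) (hs : s < 0) : ∑' c, w s c = 0 := by
    refine (tsum_congr fun c => ?_).trans tsum_zero
    by_contra hc
    have := hw s c hc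
    lia
  have hzero : ∑' c, w 0 c = w 0 0 := by
    refine tsum_eq_single 0 fun c hc => ?_
    by_contra hc'
    have := hw 0 c hc'
    lia
  have hrec (s : ℤ) : (1 - q ^ s) * ∑' c, w s c = ∑' c, w (s - 1) c := by
    rw [← tsum_mul_left]
    exact tsum_eq_tsum_of_telescoping ((hsummable hw s).mul_left _) (hsummable hw (s - 1))
      (hsummable hB s) (h s)
  rw [eq_mul_qPochInv_of_recurrence hq hneg hrec s, hzero]

end ReciprocalPochhammer

section ClassicalIdentities

variable {q z : ℂ}

lemma q_vandermonde (hq0 : q ≠ 0) (hq : ‖q‖ < 1) (k l : ℤ) :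
    ∑' c, q ^ ((k - c) * (l - c)) * (qPochInv q (k - c) * qPochInv q (l - c) * qPochInv q c) =
      qPochInv q k * qPochInv q l := by
  have hsum := tsum_eq_mul_qPochInv_of_telescoping hq
    (w := fun k c => q ^ ((k - c) * (l - c)) *
      (qPochInv q (k - c) * qPochInv q (l - c) * qPochInv q c))
    (B := fun k c => q ^ ((k - c) * (l - c + 1)) *
      (qPochInv q (k - c) * qPochInv q (l - c) * qPochInv q (c - 1))) ?_ ?_ ?_ k
  · simpa only [sub_zero, zero_mul, zpow_zero, qPochInv_zero, one_mul, mul_one,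
      mul_comm (qPochInv q l)] using hsum
  · intro k c h
    simp only [mul_ne_zero_iff] at h
    have := nonneg_of_qPochInv_ne_zero h.2.1.1
    have := nonneg_of_qPochInv_ne_zero h.2.2
    lia
  · intro k c h
    simp only [mul_ne_zero_iff] at h
    have := nonneg_of_qPochInv_ne_zero h.2.1.1
    have := nonneg_of_qPochInv_ne_zero h.2.2
    lia
  · intro k c
    have hk : q ^ k = q ^ (k - c) * q ^ c := by rw [← zpow_add₀ hq0, sub_add_cancel]
    have hB : q ^ ((k - c) * (l - c + 1)) = q ^ ((k - c) * (l - c)) * q ^ (k - c) := by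
      rw [← zpow_add₀ hq0]; ring_nf
    have hw : q ^ ((k - c) * (l - c)) = q ^ ((k - 1 - c) * (l - c)) * q ^ (l - c) := by
      rw [← zpow_add₀ hq0]; ring_nf
    rw [show k - (c + 1) = k - 1 - c by ring, show l - (c + 1) + 1 = l - c by ring,
      show l - (c + 1) = l - c - 1 by ring, add_sub_cancel_right, ← one_sub_zpow_mul_qPochInv hq c,
      ← one_sub_zpow_mul_qPochInv hq (l - c), show k - 1 - c = k - c - 1 by ring,
      ← one_sub_zpow_mul_qPochInv hq (k - c), show k - c - 1 = k - 1 - c by ring, hB, hk, hw]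
    ring

lemma durfee_rectangle_identity (hq0 : q ≠ 0) (hq : ‖q‖ < 1) (m : ℤ) :
    ∑' a, q ^ (a * (a + m)) * (qPochInv q a * qPochInv q (a + m)) = (qPochInf q q)⁻¹ := by
  obtain ⟨K, hK0, hK⟩ := exists_norm_qPochInv_le hq
  have hvandermonde (k : ℕ) : qPochInv q (k + 0) * qPochInv q (k + m) =
      ∑' a, q ^ (a * (a + m)) * (qPochInv q a * qPochInv q (a + m) * qPochInv q (k + -a)) := by
    rw [add_zero, ← q_vandermonde hq0 hq, ← (Equiv.subLeft (k : ℤ)).tsum_eq]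
    refine tsum_congr fun a => ?_
    rw [Equiv.subLeft_apply, sub_sub_cancel, show (k : ℤ) + m - (k - a) = a + m by ring,
      sub_eq_add_neg]
  have hbound : Summable fun a : ℤ => ‖q‖ ^ (a * (a + m)) * (K * K * K) := by
    simpa only [mul_add, ← sq, mul_comm m] using
      (summable_zpow_sq_add_mul (norm_pos_iff.mpr hq0) hq m).mul_right (K * K * K)
  have hlim_tsum := tendsto_tsum_of_dominated_convergence (𝓕 := atTop) hbound
    (fun a => ((tendsto_qPochInv_natCast_add hq (-a)).const_mul
      (qPochInv q a * qPochInv q (a + m))).const_mul (q ^ (a * (a + m))))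
    (.of_forall fun k a => by
      rw [norm_mul, norm_mul, norm_mul, norm_zpow]
      gcongr <;> apply hK)
  have hlim_mul := (tendsto_qPochInv_natCast_add hq 0).mul (tendsto_qPochInv_natCast_add hq m)
  have h := tendsto_nhds_unique hlim_mul (hlim_tsum.congr fun k => (hvandermonde k).symm)
  simp only [← mul_assoc, tsum_mul_right] at h
  simpa only [← mul_assoc] using
    (mul_right_cancel₀ (inv_ne_zero (qPochInf_ne_zero hq hq)) h).symm

lemma summable_zpow_sq_mul_zpow_mul_qPochInv (hq0 : q ≠ 0) (hq : ‖q‖ < 1) (hz : z ≠ 0) (b : ℤ) :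
    Summable fun s : ℤ => q ^ (s ^ 2) * z ^ s * qPochInv (q ^ 2) (s + b) := by
  obtain ⟨K, -, hK⟩ := exists_norm_qPochInv_le (norm_pow_lt_one hq two_ne_zero)
  refine ((summable_zpow_sq_mul_zpow (norm_pos_iff.mpr hq0) hq
    (norm_pos_iff.mpr hz)).mul_right K).of_norm_bounded fun s => ?_
  rw [norm_mul, norm_mul, norm_zpow, norm_zpow]
  gcongr
  exact hK _

lemma tsum_zpow_sq_mul_qPochInv_eq_one_add_mul (hq0 : q ≠ 0) (hq : ‖q‖ < 1) (hz : z ≠ 0) :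
    ∑' s : ℤ, q ^ (s ^ 2) * z ^ s * qPochInv (q ^ 2) s =
      (1 + q * z) * ∑' s : ℤ, q ^ (s ^ 2) * (z * q ^ 2) ^ s * qPochInv (q ^ 2) s := by
  have hf := summable_zpow_sq_mul_zpow_mul_qPochInv hq0 hq hz 0
  have hg := summable_zpow_sq_mul_zpow_mul_qPochInv hq0 hq (mul_ne_zero hz (pow_ne_zero 2 hq0)) 0
  have hB := summable_zpow_sq_mul_zpow_mul_qPochInv hq0 hq hz (-1)
  simp only [add_zero, ← sub_eq_add_neg] at hf hg hB
  rw [← tsum_mul_left]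
  refine tsum_eq_tsum_of_telescoping hf (hg.mul_left _) hB fun s => ?_
  have hsq : q ^ ((s + 1) ^ 2) = q ^ (s ^ 2) * q ^ (2 * s) * q := by
    rw [← zpow_add₀ hq0, ← zpow_add_one₀ hq0]; ring_nf
  rw [add_sub_cancel_right, ← one_sub_zpow_mul_qPochInv (norm_pow_lt_one hq two_ne_zero),
    mul_zpow, sq_zpow_eq_zpow_two_mul, zpow_add_one₀ hz, hsq]
  ring

lemma tsum_zpow_sq_mul_qPochInv_eq_qPoch_mul (hq0 : q ≠ 0) (hq : ‖q‖ < 1) (hz : z ≠ 0) (n : ℕ) :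
    ∑' s : ℤ, q ^ (s ^ 2) * z ^ s * qPochInv (q ^ 2) s = qPoch (-(q * z)) (q ^ 2) n *
      ∑' s : ℤ, q ^ (s ^ 2) * (z * (q ^ 2) ^ n) ^ s * qPochInv (q ^ 2) s := by
  induction n with
  | zero => simp [qPoch]
  | succ n ih =>
    have hz' : z * (q ^ 2) ^ n ≠ 0 := mul_ne_zero hz (pow_ne_zero n (pow_ne_zero 2 hq0))
    rw [ih, tsum_zpow_sq_mul_qPochInv_eq_one_add_mul hq0 hq hz', qPoch_succ, mul_assoc z,
      ← pow_succ]
    ring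

lemma tendsto_zpow_mul_qPochInv (hq : ‖q‖ < 1) (s : ℤ) :
    Tendsto (fun n : ℕ => (q ^ n) ^ s * qPochInv q s) atTop (𝓝 (if s = 0 then 1 else 0)) := by
  obtain hs | rfl | hs := lt_trichotomy s 0
  · simp only [qPochInv_of_neg _ hs, mul_zero, if_neg hs.ne, tendsto_const_nhds]
  · simp [qPochInv_zero]
  · lift s to ℕ using hs.le
    have hs0 : s ≠ 0 := by lia
    simpa only [if_neg hs.ne', zpow_natCast, zero_pow hs0, zero_mul] using
      ((tendsto_pow_atTop_nhds_zero_of_norm_lt_one hq).pow s).mul_const (qPochInv q s)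

lemma euler_qPochInf_expansion (hq0 : q ≠ 0) (hq : ‖q‖ < 1) (hz : z ≠ 0) :
    ∑' s : ℤ, q ^ (s ^ 2) * z ^ s * qPochInv (q ^ 2) s = qPochInf (-(q * z)) (q ^ 2) := by
  have hq2 := norm_pow_lt_one hq two_ne_zero
  have hsum := summable_zpow_sq_mul_zpow_mul_qPochInv hq0 hq hz 0
  simp only [add_zero] at hsum
  have hbound (n : ℕ) (s : ℤ) : ‖q ^ (s ^ 2) * z ^ s * (((q ^ 2) ^ n) ^ s * qPochInv (q ^ 2) s)‖ ≤
      ‖q ^ (s ^ 2) * z ^ s * qPochInv (q ^ 2) s‖ := by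
    obtain hs | hs := lt_or_ge s 0
    · simp [qPochInv_of_neg _ hs]
    · lift s to ℕ using hs
      rw [mul_left_comm, norm_mul, zpow_natCast, norm_pow, norm_pow]
      exact mul_le_of_le_one_left (norm_nonneg _)
        (pow_le_one₀ (by positivity) (pow_le_one₀ (norm_nonneg _) hq2.le))
  have hlim := tendsto_tsum_of_dominated_convergence hsum.norm
    (fun s => (tendsto_zpow_mul_qPochInv hq2 s).const_mul (q ^ (s ^ 2) * z ^ s))
    (.of_forall hbound)
  have hval : ∑' s : ℤ, q ^ (s ^ 2) * z ^ s * (if s = 0 then 1 else 0) = 1 := by simp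
  rw [hval] at hlim
  refine tendsto_nhds_unique (tendsto_const_nhds.congr fun n => ?_)
    (((tendsto_qPoch (-(q * z)) hq2).mul hlim).trans_eq (by rw [mul_one]))
  rw [tsum_zpow_sq_mul_qPochInv_eq_qPoch_mul hq0 hq hz n]
  simp only [mul_zpow, mul_assoc]

lemma jacobi_triple_product (hq0 : q ≠ 0) (hq : ‖q‖ < 1) (hz : z ≠ 0) :
    ∑' n : ℤ, q ^ (n ^ 2) * z ^ n =
      qPochInf (-(q * z)) (q ^ 2) * qPochInf (-(q * z⁻¹)) (q ^ 2) * qPochInf (q ^ 2) (q ^ 2) := by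
  have hq2 := norm_pow_lt_one hq two_ne_zero
  have hs₁ := summable_zpow_sq_mul_zpow_mul_qPochInv hq0 hq hz 0
  have hs₂ := summable_zpow_sq_mul_zpow_mul_qPochInv hq0 hq (inv_ne_zero hz) 0
  simp only [add_zero] at hs₁ hs₂
  let e : ℤ × ℤ ≃ ℤ × ℤ :=
    { toFun := fun p => (p.2 + p.1, p.2)
      invFun := fun p => (p.1 - p.2, p.2)
      left_inv := fun p => Prod.ext (by ring) rfl
      right_inv := fun p => Prod.ext (by ring) rfl }
  have hs := e.summable_iff.mpr (summable_mul_of_summable_norm hs₁.norm hs₂.norm)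
  rw [comp_def] at hs
  rw [← div_eq_iff (qPochInf_ne_zero hq2 hq2), div_eq_mul_inv, ← euler_qPochInf_expansion hq0 hq hz,
    ← euler_qPochInf_expansion hq0 hq (inv_ne_zero hz), ← tsum_mul_right,
    tsum_mul_tsum_of_summable_norm hs₁.norm hs₂.norm, ← e.tsum_eq, hs.tsum_prod]
  refine tsum_congr fun n => ?_
  rw [← durfee_rectangle_identity (pow_ne_zero 2 hq0) hq2 n, ← tsum_mul_left]
  refine tsum_congr fun a => ?_
  have hexp : q ^ (n ^ 2) * q ^ (2 * (a * (a + n))) = q ^ ((a + n) ^ 2) * q ^ (a ^ 2) := by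
    rw [← zpow_add₀ hq0, ← zpow_add₀ hq0]; ring_nf
  have hza := zpow_ne_zero a hz
  simp only [e, Equiv.coe_fn_mk, sq_zpow_eq_zpow_two_mul, inv_zpow, zpow_add₀ hz]
  field_simp
  linear_combination (qPochInv (q ^ 2) a * qPochInv (q ^ 2) (a + n)) * hexp

end ClassicalIdentities

section EvenOddConvolution

variable {q : ℂ}

/-- The coefficient of `z ^ n` in the product `(-z; q²)_∞ (-zq; q²)_∞` of the even and odd factors
of `(-z; q)_∞`, both expanded by Euler's identity. -/
noncomputable def evenOddConv (q : ℂ) (n : ℤ) : ℂ :=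
  ∑' b, q ^ ((n - b) ^ 2 - (n - b) + b ^ 2) * (qPochInv (q ^ 2) (n - b) * qPochInv (q ^ 2) b)

lemma evenOddConv_term_support {n b : ℤ} {x : ℂ}
    (h : x * (qPochInv (q ^ 2) (n - b) * qPochInv (q ^ 2) b) ≠ 0) : 0 ≤ b ∧ b ≤ n := by
  simp only [mul_ne_zero_iff] at h
  exact ⟨nonneg_of_qPochInv_ne_zero h.2.2, sub_nonneg.mp (nonneg_of_qPochInv_ne_zero h.2.1)⟩

lemma summable_evenOddConv_term (f : ℤ → ℂ) (n : ℤ) :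
    Summable fun b => f b * (qPochInv (q ^ 2) (n - b) * qPochInv (q ^ 2) b) :=
  summable_of_hasFiniteSupport
    ((Set.finite_Icc 0 n).subset fun _ hb => evenOddConv_term_support hb)

lemma nonneg_of_evenOddConv_ne_zero {n : ℤ} (h : evenOddConv q n ≠ 0) : 0 ≤ n := by
  contrapose! h
  refine (tsum_congr fun b => ?_).trans tsum_zero
  by_contra hb
  have := evenOddConv_term_support hb
  lia

lemma evenOddConv_zero (q : ℂ) : evenOddConv q 0 = 1 := by
  rw [evenOddConv, tsum_eq_single 0]
  · simp [qPochInv_zero]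
  · intro b hb
    by_contra h
    have := evenOddConv_term_support h
    lia

lemma tsum_evenOddConv_term_mul_zpow (hq0 : q ≠ 0) (n : ℤ) :
    ∑' b, q ^ ((n - b) ^ 2 - (n - b) + b ^ 2 + 2 * (n - b)) *
      (qPochInv (q ^ 2) (n - b) * qPochInv (q ^ 2) b) = q ^ n * evenOddConv q n := by
  rw [evenOddConv, ← tsum_mul_left, ← (Equiv.subLeft n).tsum_eq]
  refine tsum_congr fun b => ?_
  rw [Equiv.subLeft_apply, sub_sub_cancel, ← mul_assoc (q ^ n), ← zpow_add₀ hq0,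
    mul_comm (qPochInv _ b)]
  ring_nf

lemma one_sub_zpow_mul_evenOddConv (hq0 : q ≠ 0) (hq : ‖q‖ < 1) (n : ℤ) :
    (1 - q ^ n) * evenOddConv q n = q ^ (n - 1) * evenOddConv q (n - 1) := by
  rw [one_sub_mul, ← tsum_evenOddConv_term_mul_zpow hq0, ← tsum_evenOddConv_term_mul_zpow hq0,
    evenOddConv, ← (summable_evenOddConv_term _ n).tsum_sub (summable_evenOddConv_term _ n)]
  refine tsum_congr fun b => ?_
  rw [show n - 1 - b = n - b - 1 by ring,
    ← one_sub_zpow_mul_qPochInv (norm_pow_lt_one hq two_ne_zero) (n - b), sq_zpow_eq_zpow_two_mul,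
    zpow_add₀ hq0 _ (2 * (n - b))]
  ring_nf

lemma tsum_evenOddConv_mul_qPochInv (hq0 : q ≠ 0) (hq : ‖q‖ < 1) (s : ℤ) :
    ∑' c, evenOddConv q (s - 2 * c) * qPochInv (q ^ 2) c = qPochInv q s := by
  have hsum := tsum_eq_mul_qPochInv_of_telescoping hq
    (w := fun s c => evenOddConv q (s - 2 * c) * qPochInv (q ^ 2) c)
    (B := fun s c => q ^ (s - 2 * c) * evenOddConv q (s - 2 * c) * qPochInv (q ^ 2) (c - 1))
    ?_ ?_ ?_ s
  · simpa only [mul_zero, sub_zero, evenOddConv_zero, qPochInv_zero, one_mul] using hsum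
  · intro s c h
    have := nonneg_of_evenOddConv_ne_zero (left_ne_zero_of_mul h)
    have := nonneg_of_qPochInv_ne_zero (right_ne_zero_of_mul h)
    lia
  · intro s c h
    have := nonneg_of_evenOddConv_ne_zero (right_ne_zero_of_mul (left_ne_zero_of_mul h))
    have := nonneg_of_qPochInv_ne_zero (right_ne_zero_of_mul h)
    lia
  · intro s c
    have hs : q ^ s = q ^ (s - 2 * c) * q ^ (2 * c) := by rw [← zpow_add₀ hq0, sub_add_cancel]
    have hrec := one_sub_zpow_mul_evenOddConv hq0 hq (s - 2 * c)
    have hrec' := one_sub_zpow_mul_evenOddConv hq0 hq (s - 2 * c - 1)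
    rw [show s - 2 * (c + 1) = s - 2 * c - 1 - 1 by ring, ← hrec', add_sub_cancel_right,
      ← one_sub_zpow_mul_qPochInv (norm_pow_lt_one hq two_ne_zero) c, sq_zpow_eq_zpow_two_mul,
      show s - 1 - 2 * c = s - 2 * c - 1 by ring, hs]
    linear_combination qPochInv (q ^ 2) c * hrec

end EvenOddConvolution

section FourfoldTerm

/-- The summand of the fourfold series, with `1 / (q²; q²)_n` extended by zero to negative `n`. -/
noncomputable def fourfoldTerm (q : ℂ) : ℤ × ℤ × ℤ × ℤ → ℂ
  | (i, j, k, l) => q ^ (2 * i ^ 2 + 2 * j ^ 2 + 2 * k ^ 2 + 2 * l ^ 2 - 2 * i * j - 2 * i * k -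
      2 * i * l + 2 * j * k + 2 * j * l - j) *
      (qPochInv (q ^ 2) i * qPochInv (q ^ 2) j * qPochInv (q ^ 2) k * qPochInv (q ^ 2) l)

lemma fourfoldTerm_natCast (q : ℂ) (i j k l : ℕ) :
    fourfoldTerm q (i, j, k, l) =
      q ^ (2 * (i : ℤ) ^ 2 + 2 * (j : ℤ) ^ 2 + 2 * (k : ℤ) ^ 2 + 2 * (l : ℤ) ^ 2 -
          2 * (i : ℤ) * (j : ℤ) - 2 * (i : ℤ) * (k : ℤ) - 2 * (i : ℤ) * (l : ℤ) +
          2 * (j : ℤ) * (k : ℤ) + 2 * (j : ℤ) * (l : ℤ) - (j : ℤ)) /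
        (qPoch (q ^ 2) (q ^ 2) i * qPoch (q ^ 2) (q ^ 2) j * qPoch (q ^ 2) (q ^ 2) k *
          qPoch (q ^ 2) (q ^ 2) l) := by
  simp only [fourfoldTerm, qPochInv_natCast, div_eq_mul_inv, mul_inv]

lemma tsum_natCast_fourfoldTerm (q : ℂ) :
    ∑' p : ℕ × ℕ × ℕ × ℕ, fourfoldTerm q (p.1, p.2.1, p.2.2.1, p.2.2.2) =
      ∑' p, fourfoldTerm q p := by
  have hinj : Injective fun p : ℕ × ℕ × ℕ × ℕ =>
      ((p.1, p.2.1, p.2.2.1, p.2.2.2) : ℤ × ℤ × ℤ × ℤ) := by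
    rintro ⟨a, b, c, d⟩ ⟨a', b', c', d'⟩ h
    simpa using h
  refine hinj.tsum_eq ?_
  rintro ⟨i, j, k, l⟩ h
  simp only [mem_support, fourfoldTerm, mul_ne_zero_iff] at h
  obtain ⟨-, ⟨⟨hi, hj⟩, hk⟩, hl⟩ := h
  exact ⟨(i.toNat, j.toNat, k.toNat, l.toNat), by
    simp [nonneg_of_qPochInv_ne_zero hi, nonneg_of_qPochInv_ne_zero hj,
      nonneg_of_qPochInv_ne_zero hk, nonneg_of_qPochInv_ne_zero hl]⟩

end FourfoldTerm

section FivefoldSum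

variable {q : ℂ}

/-- The summand of the fivefold series obtained from the fourfold one by expanding the product of
the two factors `1 / (q²; q²)_k` and `1 / (q²; q²)_l` by the `q`-Vandermonde identity, where
`k = a + c` and `l = b + c`. -/
noncomputable def fivefoldTerm (q : ℂ) : ℤ × ℤ × ℤ × ℤ × ℤ → ℂ
  | (i, a, j, b, c) => q ^ (i ^ 2 + a ^ 2 + b ^ 2 + j ^ 2 - j + (i - a - j - b - 2 * c) ^ 2) *
      (qPochInv (q ^ 2) i * qPochInv (q ^ 2) a * qPochInv (q ^ 2) j * qPochInv (q ^ 2) b *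
        qPochInv (q ^ 2) c)

lemma summable_fivefoldTerm (hq0 : q ≠ 0) (hq : ‖q‖ < 1) : Summable (fivefoldTerm q) := by
  obtain ⟨K, hK0, hK⟩ := exists_norm_qPochInv_le (norm_pow_lt_one hq two_ne_zero)
  have hnq : 0 < ‖q‖ := norm_pos_iff.mpr hq0
  have hsq : Summable fun n : ℤ => ‖q‖ ^ (n ^ 2 + 0 * n) := summable_zpow_sq_add_mul hnq hq 0
  have hquad := summable_zpow_add hnq hsq (summable_zpow_add hnq hsq (summable_zpow_add hnq hsq
    (summable_zpow_add hnq (summable_zpow_sq_add_mul hnq hq (-1)) hsq)))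
  have hinj : Injective fun p : ℤ × ℤ × ℤ × ℤ × ℤ =>
      (p.1, p.2.1, p.2.2.2.1, p.2.2.1, p.1 - p.2.1 - p.2.2.1 - p.2.2.2.1 - 2 * p.2.2.2.2) := by
    rintro ⟨i, a, j, b, c⟩ ⟨i', a', j', b', c'⟩ h
    simp only [Prod.mk.injEq] at h ⊢
    lia
  refine (summable_zpow_mul_of_bounded (hquad.comp_injective hinj)
    (c := fun p => qPochInv (q ^ 2) p.1 * qPochInv (q ^ 2) p.2.1 * qPochInv (q ^ 2) p.2.2.1 *
      qPochInv (q ^ 2) p.2.2.2.1 * qPochInv (q ^ 2) p.2.2.2.2) (K := K * K * K * K * K)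
    fun p => ?_).congr ?_
  · simp only [norm_mul]
    gcongr <;> apply hK
  · rintro ⟨i, a, j, b, c⟩
    simp only [fivefoldTerm]
    ring_nf

lemma tsum_fourfoldTerm_eq_tsum_fivefoldTerm (hq0 : q ≠ 0) (hq : ‖q‖ < 1) :
    ∑' p, fourfoldTerm q p = ∑' p, fivefoldTerm q p := by
  let e : (ℤ × ℤ × ℤ × ℤ) × ℤ ≃ ℤ × ℤ × ℤ × ℤ × ℤ :=
    { toFun := fun ((i, j, k, l), c) => (i, k - c, j, l - c, c)
      invFun := fun (i, a, j, b, c) => ((i, j, a + c, b + c), c)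
      left_inv := by rintro ⟨⟨i, j, k, l⟩, c⟩; simp
      right_inv := by rintro ⟨i, a, j, b, c⟩; simp }
  have hs : Summable fun p => fivefoldTerm q (e p) :=
    (summable_fivefoldTerm hq0 hq).comp_injective e.injective
  rw [← e.tsum_eq, hs.tsum_prod]
  refine tsum_congr fun (i, j, k, l) => ?_
  have hq2 := norm_pow_lt_one hq two_ne_zero
  rw [fourfoldTerm, mul_assoc (_ * _), ← q_vandermonde (pow_ne_zero 2 hq0) hq2 k l, ← tsum_mul_left,
    ← tsum_mul_left]
  refine tsum_congr fun c => ?_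
  have hexp : i ^ 2 + (k - c) ^ 2 + (l - c) ^ 2 + j ^ 2 - j +
      (i - (k - c) - j - (l - c) - 2 * c) ^ 2 = 2 * i ^ 2 + 2 * j ^ 2 + 2 * k ^ 2 + 2 * l ^ 2 -
        2 * i * j - 2 * i * k - 2 * i * l + 2 * j * k + 2 * j * l - j +
        2 * ((k - c) * (l - c)) := by ring
  simp only [e, Equiv.coe_fn_mk, fivefoldTerm]
  rw [hexp, sq_zpow_eq_zpow_two_mul, zpow_add₀ hq0]
  ring

lemma tsum_fivefoldTerm (hq0 : q ≠ 0) (hq : ‖q‖ < 1) :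
    ∑' p, fivefoldTerm q p = (J q 2)⁻¹ *
      ∑' s : ℤ, (∑' m : ℤ, q ^ (m ^ 2 + (m - s) ^ 2)) * qPochInv q s := by
  let e : ℤ × ℤ × ℤ × ℤ × ℤ ≃ ℤ × ℤ × ℤ × ℤ × ℤ :=
    { toFun := fun (s, m, a, c, b) => (a + m, a, s - 2 * c - b, b, c)
      invFun := fun (i, a, j, b, c) => (j + b + 2 * c, i - a, a, c, b)
      left_inv := by rintro ⟨s, m, a, c, b⟩; simp
      right_inv := by rintro ⟨i, a, j, b, c⟩; simp }
  have hfactor (s m a c b : ℤ) : fivefoldTerm q (e (s, m, a, c, b)) =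
      q ^ (m ^ 2 + (m - s) ^ 2) * ((q ^ 2) ^ (a * (a + m)) *
        (qPochInv (q ^ 2) a * qPochInv (q ^ 2) (a + m)) *
      (q ^ ((s - 2 * c - b) ^ 2 - (s - 2 * c - b) + b ^ 2) *
        (qPochInv (q ^ 2) (s - 2 * c - b) * qPochInv (q ^ 2) b) * qPochInv (q ^ 2) c)) := by
    have hexp : (a + m) ^ 2 + a ^ 2 + b ^ 2 + (s - 2 * c - b) ^ 2 - (s - 2 * c - b) +
        (a + m - a - (s - 2 * c - b) - b - 2 * c) ^ 2 = m ^ 2 + (m - s) ^ 2 + 2 * (a * (a + m)) +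
          ((s - 2 * c - b) ^ 2 - (s - 2 * c - b) + b ^ 2) := by ring
    simp only [e, Equiv.coe_fn_mk, fivefoldTerm, hexp, sq_zpow_eq_zpow_two_mul]
    rw [zpow_add₀ hq0 (_ + _), zpow_add₀ hq0 _ (2 * _)]
    ring
  have hq2 := norm_pow_lt_one hq two_ne_zero
  have hs : Summable fun p => fivefoldTerm q (e p) :=
    (summable_fivefoldTerm hq0 hq).comp_injective e.injective
  rw [J, ← e.tsum_eq, tsum_prod_fivefold hs, ← tsum_mul_left]
  refine tsum_congr fun s => ?_
  simp only [hfactor, tsum_mul_left, tsum_mul_right, ← evenOddConv.eq_1,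
    tsum_evenOddConv_mul_qPochInv hq0 hq,
    durfee_rectangle_identity (pow_ne_zero 2 hq0) hq2]
  ring

end FivefoldSum

section ParitySplit

variable {q : ℂ}

lemma tsum_zpow_sq_add_sub_sq_even (hq0 : q ≠ 0) (n : ℤ) :
    ∑' m : ℤ, q ^ (m ^ 2 + (m - 2 * n) ^ 2) = (∑' t : ℤ, q ^ (2 * t ^ 2)) * q ^ (2 * n ^ 2) := by
  rw [← (Equiv.addRight n).tsum_eq, ← tsum_mul_right]
  refine tsum_congr fun t => ?_
  rw [Equiv.coe_addRight, ← zpow_add₀ hq0]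
  ring_nf

lemma tsum_zpow_sq_add_sub_sq_odd (hq0 : q ≠ 0) (n : ℤ) :
    ∑' m : ℤ, q ^ (m ^ 2 + (m - (2 * n + 1)) ^ 2) =
      q * (∑' t : ℤ, q ^ (2 * t ^ 2 + 2 * t)) * q ^ (2 * n ^ 2 + 2 * n) := by
  rw [← (Equiv.addRight (n + 1)).tsum_eq, ← tsum_mul_left, ← tsum_mul_right]
  refine tsum_congr fun t => ?_
  rw [Equiv.coe_addRight, ← zpow_one_add₀ hq0, ← zpow_add₀ hq0]
  ring_nf

lemma summable_zpow_two_mul_mul_qPochInv (hq0 : q ≠ 0) (hq : ‖q‖ < 1) (b : ℤ) (g : ℤ → ℤ) :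
    Summable fun n : ℤ => q ^ (2 * n ^ 2 + 2 * b * n) * qPochInv q (g n) := by
  obtain ⟨K, -, hK⟩ := exists_norm_qPochInv_le hq
  have hnq : 0 < ‖q‖ := norm_pos_iff.mpr hq0
  refine summable_zpow_mul_of_bounded ?_ fun n => hK (g n)
  refine (summable_zpow_sq_add_mul (pow_pos hnq 2) (pow_lt_one₀ hnq.le hq two_ne_zero)
    b).congr fun n => ?_
  rw [← zpow_natCast, ← zpow_mul]
  ring_nf

lemma tsum_mul_qPochInv_eq_even_add_odd (hq0 : q ≠ 0) (hq : ‖q‖ < 1) :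
    ∑' s : ℤ, (∑' m : ℤ, q ^ (m ^ 2 + (m - s) ^ 2)) * qPochInv q s =
      (∑' t : ℤ, q ^ (2 * t ^ 2)) * ∑' n : ℤ, q ^ (2 * n ^ 2) * qPochInv q (2 * n) +
      q * (∑' t : ℤ, q ^ (2 * t ^ 2 + 2 * t)) *
        ∑' n : ℤ, q ^ (2 * n ^ 2 + 2 * n) * qPochInv q (2 * n + 1) := by
  have he := summable_zpow_two_mul_mul_qPochInv hq0 hq 0 fun n => 2 * n
  have ho := summable_zpow_two_mul_mul_qPochInv hq0 hq 1 fun n => 2 * n + 1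
  simp only [mul_zero, zero_mul, add_zero, mul_one] at he ho
  rw [← tsum_int_even_add_odd]
  · simp only [tsum_zpow_sq_add_sub_sq_even hq0, tsum_zpow_sq_add_sub_sq_odd hq0, mul_assoc,
      tsum_mul_left]
  · simpa only [tsum_zpow_sq_add_sub_sq_even hq0, mul_assoc] using he.mul_left _
  · simpa only [tsum_zpow_sq_add_sub_sq_odd hq0, mul_assoc] using (ho.mul_left _).mul_left q

end ParitySplit

section SlaterIdentities

variable {q r : ℂ}

lemma tsum_mul_zpow_sq_mul_qPochInv_mul_qPochInf (hr0 : r ≠ 0) (hr : ‖r‖ < 1) {x : ℂ}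
    (hx : x * x = 1) :
    (∑' n : ℤ, x ^ n * (r ^ (n ^ 2) * qPochInv (r ^ 2) n)) * qPochInf (r ^ 4) (r ^ 4) =
      ∑' n : ℤ, x ^ n * r ^ (2 * n ^ 2 - n) := by
  have hx0 : x ≠ 0 := left_ne_zero_of_mul_eq_one hx
  have hr2 := norm_pow_lt_one hr two_ne_zero
  have heuler := euler_qPochInf_expansion hr0 hr hx0
  have htriple := jacobi_triple_product (pow_ne_zero 2 hr0) hr2 (mul_ne_zero hx0 (inv_ne_zero hr0))
  rw [mul_inv, inv_inv, inv_eq_of_mul_eq_one_left hx, show r ^ 2 * (x * r⁻¹) = r * x by field_simp,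
    show r ^ 2 * (x * r) = r * x * r ^ 2 by ring, ← pow_mul] at htriple
  calc (∑' n : ℤ, x ^ n * (r ^ (n ^ 2) * qPochInv (r ^ 2) n)) * qPochInf (r ^ 4) (r ^ 4)
      = qPochInf (-(r * x)) (r ^ 2) * qPochInf (r ^ 4) (r ^ 4) := by
        rw [← heuler]
        exact congrArg (· * _) (tsum_congr fun n => by ring)
    _ = ∑' n : ℤ, (r ^ 2) ^ (n ^ 2) * (x * r⁻¹) ^ n := by
        rw [htriple, qPochInf_eq_prod _ hr2 two_ne_zero]
        simp [Finset.prod_range_succ, ← pow_mul]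
    _ = ∑' n : ℤ, x ^ n * r ^ (2 * n ^ 2 - n) := tsum_congr fun n => by
        rw [sq_zpow_eq_zpow_two_mul, mul_zpow, inv_zpow, zpow_sub₀ hr0]; ring

lemma tsum_even_odd_mul_eq {f g : ℤ → ℂ} {C : ℂ} (hf : Summable f) (hg : Summable g)
    (h : (∑' n, f n) * C = ∑' n, g n)
    (h' : (∑' n, (-1) ^ n * f n) * C = ∑' n, (-1) ^ n * g n) :
    (∑' n, f (2 * n)) * C = ∑' n, g (2 * n) ∧
      (∑' n, f (2 * n + 1)) * C = ∑' n, g (2 * n + 1) := by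
  have inj_even : Injective fun n : ℤ => 2 * n := fun a b h => by simpa using h
  have inj_odd : Injective fun n : ℤ => 2 * n + 1 := fun a b h => by simpa using h
  rw [← tsum_int_even_add_odd (hf.comp_injective inj_even) (hf.comp_injective inj_odd),
    ← tsum_int_even_add_odd (hg.comp_injective inj_even) (hg.comp_injective inj_odd)] at h
  rw [tsum_neg_one_zpow_mul hf, tsum_neg_one_zpow_mul hg] at h'
  exact ⟨by linear_combination (h + h') / 2, by linear_combination (h - h') / 2⟩

lemma tsum_even_odd_zpow_sq_mul_qPochInv (hr0 : r ≠ 0) (hr : ‖r‖ < 1) :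
    (∑' n : ℤ, r ^ ((2 * n) ^ 2) * qPochInv (r ^ 2) (2 * n)) * qPochInf (r ^ 4) (r ^ 4) =
        ∑' n : ℤ, r ^ (2 * (2 * n) ^ 2 - 2 * n) ∧
      (∑' n : ℤ, r ^ ((2 * n + 1) ^ 2) * qPochInv (r ^ 2) (2 * n + 1)) *
          qPochInf (r ^ 4) (r ^ 4) = ∑' n : ℤ, r ^ (2 * (2 * n + 1) ^ 2 - (2 * n + 1)) := by
  have hnr : 0 < ‖r‖ := norm_pos_iff.mpr hr0
  have hf : Summable fun n : ℤ => r ^ (n ^ 2) * qPochInv (r ^ 2) n := by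
    simpa using summable_zpow_sq_mul_zpow_mul_qPochInv hr0 hr one_ne_zero 0
  have hg : Summable fun n : ℤ => r ^ (2 * n ^ 2 - n) := by
    refine .of_norm ((summable_zpow_sq_mul_zpow (pow_pos hnr 2)
      (pow_lt_one₀ hnr.le hr two_ne_zero) (inv_pos.mpr hnr)).congr fun n => ?_)
    rw [norm_zpow, zpow_sub₀ hnr.ne', inv_zpow, zpow_mul, div_eq_mul_inv, zpow_ofNat]
  have h₁ := tsum_mul_zpow_sq_mul_qPochInv_mul_qPochInf hr0 hr (one_mul 1)
  have h₂ := tsum_mul_zpow_sq_mul_qPochInv_mul_qPochInf hr0 hr (by norm_num : (-1 : ℂ) * -1 = 1)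
  simp only [one_zpow, one_mul] at h₁
  exact tsum_even_odd_mul_eq hf hg h₁ h₂

lemma exists_sq_eq_of_norm_lt_one (hq0 : q ≠ 0) (hq : ‖q‖ < 1) :
    ∃ r : ℂ, r ≠ 0 ∧ ‖r‖ < 1 ∧ r ^ 2 = q := by
  obtain ⟨r, rfl⟩ := IsAlgClosed.exists_pow_nat_eq q two_pos
  rw [norm_pow] at hq
  exact ⟨r, ne_zero_pow two_ne_zero hq0,
    (pow_lt_one_iff_of_nonneg (norm_nonneg r) two_ne_zero).mp hq, rfl⟩

lemma tsum_even_qPochInv_mul_J (hq0 : q ≠ 0) (hq : ‖q‖ < 1) :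
    (∑' n : ℤ, q ^ (2 * n ^ 2) * qPochInv q (2 * n)) * J q 2 =
      ∑' n : ℤ, q ^ (4 * n ^ 2 - n) := by
  obtain ⟨r, hr0, hr, rfl⟩ := exists_sq_eq_of_norm_lt_one hq0 hq
  have heven := (tsum_even_odd_zpow_sq_mul_qPochInv hr0 hr).1
  have hleft (n : ℤ) : r ^ ((2 * n) ^ 2) = (r ^ 2) ^ (2 * n ^ 2) := by
    rw [sq_zpow_eq_zpow_two_mul]; ring_nf
  have hright (n : ℤ) : r ^ (2 * (2 * n) ^ 2 - 2 * n) = (r ^ 2) ^ (4 * n ^ 2 - n) := by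
    rw [sq_zpow_eq_zpow_two_mul]; ring_nf
  simp only [hleft, hright] at heven
  rw [J, ← pow_mul]
  exact heven

lemma tsum_odd_qPochInv_mul_J (hq0 : q ≠ 0) (hq : ‖q‖ < 1) :
    (∑' n : ℤ, q ^ (2 * n ^ 2 + 2 * n) * qPochInv q (2 * n + 1)) * J q 2 =
      ∑' n : ℤ, q ^ (4 * n ^ 2 + 3 * n) := by
  obtain ⟨r, hr0, hr, rfl⟩ := exists_sq_eq_of_norm_lt_one hq0 hq
  refine mul_left_cancel₀ hr0 ?_
  have hodd := (tsum_even_odd_zpow_sq_mul_qPochInv hr0 hr).2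
  have hleft (n : ℤ) : r ^ ((2 * n + 1) ^ 2) = r * (r ^ 2) ^ (2 * n ^ 2 + 2 * n) := by
    rw [sq_zpow_eq_zpow_two_mul, ← zpow_one_add₀ hr0]; ring_nf
  have hright (n : ℤ) : r ^ (2 * (2 * n + 1) ^ 2 - (2 * n + 1)) =
      r * (r ^ 2) ^ (4 * n ^ 2 + 3 * n) := by
    rw [sq_zpow_eq_zpow_two_mul, ← zpow_one_add₀ hr0]; ring_nf
  simp only [hleft, hright, mul_assoc, tsum_mul_left] at hodd
  rw [J, ← pow_mul]
  exact hodd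

end SlaterIdentities

section ThetaProducts

variable {q : ℂ}

lemma J_ne_zero (hq : ‖q‖ < 1) {m : ℕ} (hm : m ≠ 0) : J q m ≠ 0 :=
  qPochInf_ne_zero (norm_pow_lt_one hq hm) (norm_pow_lt_one hq hm)

lemma Jam_ne_zero (hq : ‖q‖ < 1) {a m : ℕ} (ha : a ≠ 0) (ham : a < m) : Jam q a m ≠ 0 := by
  have hm : m ≠ 0 := by lia
  exact mul_ne_zero (mul_ne_zero (qPochInf_ne_zero (norm_pow_lt_one hq ha) (norm_pow_lt_one hq hm))
    (qPochInf_ne_zero (norm_pow_lt_one hq (by lia)) (norm_pow_lt_one hq hm))) (J_ne_zero hq hm)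

lemma Jam_sub (q : ℂ) {a m : ℕ} (h : a ≤ m) : Jam q (m - a) m = Jam q a m := by
  rw [Jam, Jam, Nat.sub_sub_self h, mul_comm (qPochInf (q ^ (m - a)) _)]

lemma Jam_mul_J_two_mul (hq : ‖q‖ < 1) {m : ℕ} (hm : m ≠ 0) :
    Jam q m (2 * m) * J q (2 * m) = J q m ^ 2 := by
  have hsplit := qPochInf_eq_prod (q ^ m) (norm_pow_lt_one hq hm) two_ne_zero
  simp only [Finset.prod_range_succ, Finset.prod_range_zero, one_mul, mul_zero, add_zero,
    ← pow_mul, ← pow_add, mul_one, mul_comm m 2] at hsplit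
  rw [Jam, J, J, hsplit, two_mul, Nat.add_sub_cancel]
  ring

lemma tsum_zpow_mul_Jam_mul_J (hq0 : q ≠ 0) (hq : ‖q‖ < 1) {a m : ℕ} (hm : m ≠ 0)
    (ha : a ≤ 2 * m) :
    (∑' n : ℤ, q ^ (m * n ^ 2 + (m - a) * n : ℤ)) * Jam q a (2 * m) * J q (4 * m) =
      Jam q (2 * a) (4 * m) * J q (2 * m) ^ 2 := by
  have htriple := jacobi_triple_product (pow_ne_zero m hq0) (norm_pow_lt_one hq hm)
    (zpow_ne_zero (m - a : ℤ) hq0)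
  have hz : q ^ m * q ^ (m - a : ℤ) = q ^ (2 * m - a) := by
    rw [← zpow_natCast, ← zpow_natCast, ← zpow_add₀ hq0]; congr 1; lia
  have hz' : q ^ m * (q ^ (m - a : ℤ))⁻¹ = q ^ a := by
    rw [← zpow_natCast, ← zpow_natCast, ← zpow_neg, ← zpow_add₀ hq0]; congr 1; lia
  have hq2m := norm_pow_lt_one hq (mul_ne_zero two_ne_zero hm)
  have hsq := qPochInf_mul_qPochInf_neg (q ^ a) hq2m
  have hsq' := qPochInf_mul_qPochInf_neg (q ^ (2 * m - a)) hq2m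
  rw [hz, hz', ← pow_mul, mul_comm m 2] at htriple
  simp only [pow_zpow_eq_zpow_mul, ← zpow_mul, ← zpow_add₀ hq0] at htriple
  simp only [← pow_mul, Nat.sub_mul, mul_comm a 2, show 2 * m * 2 = 4 * m by ring] at hsq hsq'
  rw [htriple, Jam, Jam, J, J, ← hsq, ← hsq']
  ring

lemma tsum_zpow_mul_add_mul_J (hq0 : q ≠ 0) (hq : ‖q‖ < 1) {m : ℕ} (hm : m ≠ 0) :
    (∑' n : ℤ, q ^ (m * n ^ 2 + m * n : ℤ)) * J q (2 * m) = 2 * J q (4 * m) ^ 2 := by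
  have htriple := jacobi_triple_product (pow_ne_zero m hq0) (norm_pow_lt_one hq hm)
    (pow_ne_zero m hq0)
  have hq2m := norm_pow_lt_one hq (mul_ne_zero two_ne_zero hm)
  have hpeel := qPochInf_eq_one_sub_mul (-1) hq2m
  have hsq := qPochInf_mul_qPochInf_neg (q ^ (2 * m)) hq2m
  rw [mul_inv_cancel₀ (pow_ne_zero m hq0), ← pow_add, ← two_mul, ← pow_mul, mul_comm m 2,
    hpeel, neg_one_mul] at htriple
  simp only [pow_zpow_eq_zpow_mul, ← zpow_add₀ hq0] at htriple
  simp only [← pow_mul, show 2 * m * 2 = 4 * m by ring] at hsq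
  rw [htriple, J, J, ← hsq]
  ring

lemma J_one_mul_J_eight_sq (hq : ‖q‖ < 1) :
    J q 1 * J q 8 ^ 2 = Jam q 1 8 * Jam q 3 8 * J q 2 := by
  have h₁ : qPochInf q q = qPochInf q (q ^ 8) * qPochInf (q ^ 2) (q ^ 8) *
      qPochInf (q ^ 3) (q ^ 8) * qPochInf (q ^ 4) (q ^ 8) * qPochInf (q ^ 5) (q ^ 8) *
      qPochInf (q ^ 6) (q ^ 8) * qPochInf (q ^ 7) (q ^ 8) * qPochInf (q ^ 8) (q ^ 8) := by
    simpa [Finset.prod_range_succ, ← pow_succ'] using qPochInf_eq_prod q hq (by lia : 8 ≠ 0)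
  have h₂ : qPochInf (q ^ 2) (q ^ 2) = qPochInf (q ^ 2) (q ^ 8) * qPochInf (q ^ 4) (q ^ 8) *
      qPochInf (q ^ 6) (q ^ 8) * qPochInf (q ^ 8) (q ^ 8) := by
    rw [qPochInf_eq_prod (q ^ 2) (norm_pow_lt_one hq two_ne_zero) four_ne_zero]
    simp only [Finset.prod_range_succ, Finset.prod_range_zero, ← pow_mul, ← pow_add]
    norm_num
  simp only [J, Jam, pow_one, h₁, h₂]
  ring

lemma tsum_zpow_two_mul_sq (hq0 : q ≠ 0) (hq : ‖q‖ < 1) :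
    ∑' t : ℤ, q ^ (2 * t ^ 2) = J q 4 ^ 5 / (J q 2 ^ 2 * J q 8 ^ 2) := by
  have htheta : (∑' t : ℤ, q ^ (2 * t ^ 2)) * Jam q 2 4 * J q 8 = Jam q 4 8 * J q 4 ^ 2 := by
    simpa using tsum_zpow_mul_Jam_mul_J hq0 hq (a := 2) two_ne_zero (by lia)
  have h₂ : Jam q 2 4 * J q 4 = J q 2 ^ 2 := Jam_mul_J_two_mul hq two_ne_zero
  have h₄ : Jam q 4 8 * J q 8 = J q 4 ^ 2 := Jam_mul_J_two_mul hq four_ne_zero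
  have hJ4 := J_ne_zero hq four_ne_zero
  have hJ8 := J_ne_zero hq (by lia : 8 ≠ 0)
  rw [eq_div_iff (by simp [J_ne_zero hq])]
  refine mul_right_cancel₀ (mul_ne_zero hJ4 hJ8) ?_
  linear_combination J q 4 ^ 2 * J q 8 ^ 2 * htheta + J q 4 ^ 4 * J q 8 * h₄ -
    (∑' t : ℤ, q ^ (2 * t ^ 2)) * J q 4 * J q 8 ^ 3 * h₂

lemma tsum_zpow_two_mul_sq_add_two_mul (hq0 : q ≠ 0) (hq : ‖q‖ < 1) :
    ∑' t : ℤ, q ^ (2 * t ^ 2 + 2 * t) = 2 * J q 8 ^ 2 / J q 4 :=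
  eq_div_of_mul_eq (J_ne_zero hq four_ne_zero) (tsum_zpow_mul_add_mul_J hq0 hq two_ne_zero)

lemma tsum_even_qPochInv (hq0 : q ≠ 0) (hq : ‖q‖ < 1) :
    ∑' n : ℤ, q ^ (2 * n ^ 2) * qPochInv q (2 * n) =
      Jam q 1 8 * Jam q 6 16 / (J q 1 * J q 16) := by
  have htheta : (∑' n : ℤ, q ^ (4 * n ^ 2 - n)) * Jam q 3 8 * J q 16 =
      Jam q 6 16 * J q 8 ^ 2 := by
    simpa [← sub_eq_add_neg, Jam_sub q (show 3 ≤ 8 by lia), Jam_sub q (show 6 ≤ 16 by lia)] using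
      tsum_zpow_mul_Jam_mul_J hq0 hq (a := 5) four_ne_zero (by lia)
  have hslater := tsum_even_qPochInv_mul_J hq0 hq
  have hJ := J_one_mul_J_eight_sq hq
  rw [eq_div_iff (by simp [J_ne_zero hq])]
  refine mul_right_cancel₀ (mul_ne_zero (Jam_ne_zero hq three_ne_zero (by lia : 3 < 8))
    (J_ne_zero hq two_ne_zero)) ?_
  linear_combination Jam q 3 8 * J q 1 * J q 16 * hslater + J q 1 * htheta + Jam q 6 16 * hJ

lemma tsum_odd_qPochInv (hq0 : q ≠ 0) (hq : ‖q‖ < 1) :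
    ∑' n : ℤ, q ^ (2 * n ^ 2 + 2 * n) * qPochInv q (2 * n + 1) =
      Jam q 3 8 * Jam q 2 16 / (J q 1 * J q 16) := by
  have htheta : (∑' n : ℤ, q ^ (4 * n ^ 2 + 3 * n)) * Jam q 1 8 * J q 16 =
      Jam q 2 16 * J q 8 ^ 2 := by
    simpa using tsum_zpow_mul_Jam_mul_J hq0 hq (a := 1) four_ne_zero (by lia)
  have hslater := tsum_odd_qPochInv_mul_J hq0 hq
  have hJ := J_one_mul_J_eight_sq hq
  rw [eq_div_iff (by simp [J_ne_zero hq])]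
  refine mul_right_cancel₀ (mul_ne_zero (Jam_ne_zero hq one_ne_zero (by lia : 1 < 8))
    (J_ne_zero hq two_ne_zero)) ?_
  linear_combination Jam q 1 8 * J q 1 * J q 16 * hslater + J q 1 * htheta + Jam q 2 16 * hJ

end ThetaProducts

theorem stmt_7 (q : ℂ) (h0 : 0 < ‖q‖) (h1 : ‖q‖ < 1) :
    (∑' p : ℕ × ℕ × ℕ × ℕ,
      (fun (i j k l : ℕ) =>
        q ^ ((2*(i:ℤ)^2 + 2*(j:ℤ)^2 + 2*(k:ℤ)^2 + 2*(l:ℤ)^2 - 2*(i:ℤ)*(j:ℤ) - 2*(i:ℤ)*(k:ℤ) - 2*(i:ℤ)*(l:ℤ) + 2*(j:ℤ)*(k:ℤ) + 2*(j:ℤ)*(l:ℤ) - (j:ℤ)) : ℤ) /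
          (qPoch (q ^ 2) (q ^ 2) i * qPoch (q ^ 2) (q ^ 2) j * qPoch (q ^ 2) (q ^ 2) k * qPoch (q ^ 2) (q ^ 2) l))
        p.1 p.2.1 p.2.2.1 p.2.2.2)
    = (J q 4)^5 * Jam q 1 8 * Jam q 6 16 / (J q 1 * (J q 2)^3 * (J q 8)^2 * J q 16)
      + 2 * q * (J q 8)^2 * Jam q 3 8 * Jam q 2 16 / (J q 1 * J q 2 * J q 4 * J q 16) := by
  have hq0 : q ≠ 0 := norm_pos_iff.mp h0
  have hJ2 : J q 2 ≠ 0 := J_ne_zero h1 two_ne_zero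
  have hJ4 : J q 4 ≠ 0 := J_ne_zero h1 four_ne_zero
  simp only [← fourfoldTerm_natCast]
  rw [tsum_natCast_fourfoldTerm, tsum_fourfoldTerm_eq_tsum_fivefoldTerm hq0 h1,
    tsum_fivefoldTerm hq0 h1, tsum_mul_qPochInv_eq_even_add_odd hq0 h1,
    tsum_zpow_two_mul_sq hq0 h1, tsum_even_qPochInv hq0 h1,
    tsum_zpow_two_mul_sq_add_two_mul hq0 h1, tsum_odd_qPochInv hq0 h1]
  field_simp
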